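/- arXiv:2210.12638 — 3 statements merged into one kernel-verified Lean document; each statement's English description precedes it below -/
import Mathlib

section
/- Let X ∈ ℝ^{I1×I2×I3×I4} admit a Tucker-O-Minus decomposition with factor matrices U⁽ᵏ⁾ ∈ ℝ^{I_k×R_k} and core factors G⁽¹⁾,…,G⁽⁴⁾,G⁽⁵⁾. For n = 1: X_(1) = U⁽¹⁾ · G⁽¹⁾_(2) · A^{≠1}, where G⁽¹⁾_(2) ∈ ℝ^{R1 × (D4·D1·D5)} is the mode-2 unfolding of G⁽¹⁾, and A^{≠1} ∈ ℝ^{(D4·D1·D5) × (I2·I3·I4)} is the matrix with entries A^{≠1}((d4,d1,d5),(i2,i3,i4)) = Σ_{r2,r3,r4} Σ_{d2,d3,d6} G⁽²⁾(d1,r2,d2)·G⁽³⁾(d2,r3,d3,d6)·G⁽⁴⁾(d3,r4,d4)·G⁽⁵⁾(d5,d6)·U⁽²⁾(i2,r2)·U⁽³⁾(i3,r3)·U⁽⁴⁾(i4,r4), with row and column index tuples enumerated in the fixed orderings compatible with those used for G⁽¹⁾_(2) and X_(1). The analogous identity X_(3) = U⁽³⁾ · G⁽³⁾_(2) · A^{≠3}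 holds for n = 3, where G⁽³⁾_(2) ∈ ℝ^{R3 × (D2·D3·D6)} and A^{≠3}((d2,d3,d6),(i1,i2,i4)) = Σ_{r1,r2,r4} Σ_{d1,d4,d5} G⁽¹⁾(d4,r1,d1,d5)·G⁽²⁾(d1,r2,d2)·G⁽⁴⁾(d3,r4,d4)·G⁽⁵⁾(d5,d6)·U⁽¹⁾(i1,r1)·U⁽²⁾(i2,r2)·U⁽⁴⁾(i4,r4). -/
/-!
Substituting the expression of the core `G` into that of `X`, each entry of `X` becomes one sum,
over the tuples `(r1, …, r4, d1, …, d6)`, of a monomial in the entries of the factors. Expanding the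
two matrix products on the right-hand side gives one sum over the same ten indices, grouped
differently, of the same monomial. Flattening each nested sum to a sum over a product type, the
two sides are matched by the bijection that permutes the indices.
-/


open Matrix in
/-- Under a Tucker-O-Minus decomposition of the 4th-order tensor `X`,
the mode-1 unfolding factorizes as `X_(1) = U¹ · G¹_(2) · A^{≠1}` and the mode-3
unfolding as `X_(3) = U³ · G³_(2) · A^{≠3}`, with the matrices `A^{≠1}` and `A^{≠3}`
given entrywise by contracting the remaining core factors with the remaining factor
matrices. -/
theorem tomd_unfolding_factorization_modes_1_3
    (I1 I2 I3 I4 R1 R2 R3 R4 D1 D2 D3 D4 D5 D6 : ℕ)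
    (X : Fin I1 → Fin I2 → Fin I3 → Fin I4 → ℝ)
    (U1 : Matrix (Fin I1) (Fin R1) ℝ) (U2 : Matrix (Fin I2) (Fin R2) ℝ)
    (U3 : Matrix (Fin I3) (Fin R3) ℝ) (U4 : Matrix (Fin I4) (Fin R4) ℝ)
    (G1 : Fin D4 → Fin R1 → Fin D1 → Fin D5 → ℝ)
    (G2 : Fin D1 → Fin R2 → Fin D2 → ℝ)
    (G3 : Fin D2 → Fin R3 → Fin D3 → Fin D6 → ℝ)
    (G4 : Fin D3 → Fin R4 → Fin D4 → ℝ)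
    (G5 : Fin D5 → Fin D6 → ℝ)
    (G : Fin R1 → Fin R2 → Fin R3 → Fin R4 → ℝ)
    (hG : ∀ r1 r2 r3 r4, G r1 r2 r3 r4 =
      ∑ d1 : Fin D1, ∑ d2 : Fin D2, ∑ d3 : Fin D3, ∑ d4 : Fin D4, ∑ d5 : Fin D5, ∑ d6 : Fin D6,
        G1 d4 r1 d1 d5 * G2 d1 r2 d2 * G3 d2 r3 d3 d6 * G4 d3 r4 d4 * G5 d5 d6)
    (hX : ∀ i1 i2 i3 i4, X i1 i2 i3 i4 =
      ∑ r1 : Fin R1, ∑ r2 : Fin R2, ∑ r3 : Fin R3, ∑ r4 : Fin R4,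
        G r1 r2 r3 r4 * U1 i1 r1 * U2 i2 r2 * U3 i3 r3 * U4 i4 r4) :
    -- mode 1 : X_(1) = U¹ · G¹_(2) · A^{≠1}
    ((Matrix.of fun (i1 : Fin I1) (j : Fin I2 × Fin I3 × Fin I4) =>
        X i1 j.1 j.2.1 j.2.2) =
      U1 *
        (Matrix.of fun (r1 : Fin R1) (d : Fin D4 × Fin D1 × Fin D5) =>
          G1 d.1 r1 d.2.1 d.2.2) *
        (Matrix.of fun (d : Fin D4 × Fin D1 × Fin D5) (j : Fin I2 × Fin I3 × Fin I4) =>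
          ∑ r2 : Fin R2, ∑ r3 : Fin R3, ∑ r4 : Fin R4,
            ∑ d2 : Fin D2, ∑ d3 : Fin D3, ∑ d6 : Fin D6,
              G2 d.2.1 r2 d2 * G3 d2 r3 d3 d6 * G4 d3 r4 d.1 * G5 d.2.2 d6 *
                U2 j.1 r2 * U3 j.2.1 r3 * U4 j.2.2 r4))
    ∧
    -- mode 3 : X_(3) = U³ · G³_(2) · A^{≠3}
    ((Matrix.of fun (i3 : Fin I3) (j : Fin I1 × Fin I2 × Fin I4) =>
        X j.1 j.2.1 i3 j.2.2) =
      U3 *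
        (Matrix.of fun (r3 : Fin R3) (d : Fin D2 × Fin D3 × Fin D6) =>
          G3 d.1 r3 d.2.1 d.2.2) *
        (Matrix.of fun (d : Fin D2 × Fin D3 × Fin D6) (j : Fin I1 × Fin I2 × Fin I4) =>
          ∑ r1 : Fin R1, ∑ r2 : Fin R2, ∑ r4 : Fin R4,
            ∑ d1 : Fin D1, ∑ d4 : Fin D4, ∑ d5 : Fin D5,
              G1 d4 r1 d1 d5 * G2 d1 r2 d.1 * G4 d.2.1 r4 d4 * G5 d5 d.2.2 *
                U1 j.1 r1 * U2 j.2.1 r2 * U4 j.2.2 r4)) := by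
  constructor
  · ext i1 ⟨i2, i3, i4⟩
    simp only [Matrix.of_apply, Matrix.mul_apply, hX, hG, Finset.sum_mul, Finset.mul_sum,
      ← Fintype.sum_prod_type']
    exact Fintype.sum_equiv
      ⟨fun (r1, r2, r3, r4, d1, d2, d3, d4, d5, d6) => ((d4, d1, d5), (r2, r3, r4, d2, d3, d6), r1),
        fun ((d4, d1, d5), (r2, r3, r4, d2, d3, d6), r1) => (r1, r2, r3, r4, d1, d2, d3, d4, d5, d6),
        fun _ => rfl, fun _ => rfl⟩ _ _
      fun _ => by dsimp only [Equiv.coe_fn_mk]; ring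
  · ext i3 ⟨i1, i2, i4⟩
    simp only [Matrix.of_apply, Matrix.mul_apply, hX, hG, Finset.sum_mul, Finset.mul_sum,
      ← Fintype.sum_prod_type']
    exact Fintype.sum_equiv
      ⟨fun (r1, r2, r3, r4, d1, d2, d3, d4, d5, d6) => ((d2, d3, d6), (r1, r2, r4, d1, d4, d5), r3),
        fun ((d2, d3, d6), (r1, r2, r4, d1, d4, d5), r3) => (r1, r2, r3, r4, d1, d2, d3, d4, d5, d6),
        fun _ => rfl, fun _ => rfl⟩ _ _
      fun _ => by dsimp only [Equiv.coe_fn_mk]; ring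
end

section
/- Let X ∈ ℝ^{I1×I2×I3×I4} admit a Tucker-O-Minus decomposition with factor matrices U⁽ᵏ⁾ ∈ ℝ^{I_k×R_k} and core factors G⁽¹⁾,…,G⁽⁴⁾,G⁽⁵⁾. For n = 2: X_(2) = U⁽²⁾ · G⁽²⁾_(2) · A^{≠2}, where G⁽²⁾_(2) ∈ ℝ^{R2 × (D1·D2)} is the mode-2 unfolding of G⁽²⁾, and A^{≠2} ∈ ℝ^{(D1·D2) × (I1·I3·I4)} has entries A^{≠2}((d1,d2),(i1,i3,i4)) = Σ_{r1,r3,r4} Σ_{d3,d4,d5,d6} G⁽¹⁾(d4,r1,d1,d5)·G⁽³⁾(d2,r3,d3,d6)·G⁽⁴⁾(d3,r4,d4)·G⁽⁵⁾(d5,d6)·U⁽¹⁾(i1,r1)·U⁽³⁾(i3,r3)·U⁽⁴⁾(i4,r4), with index tuples enumerated in the fixed orderings compatible with those used for G⁽²⁾_(2) and X_(2). The analogous identity X_(4) = U⁽⁴⁾ · G⁽⁴⁾_(2) · A^{≠4} holds for n = 4, where G⁽⁴⁾_(2) ∈ ℝ^{R4 × (D3·D4)} and A^{≠4}((d3,d4),(i1,i2,i3))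 = Σ_{r1,r2,r3} Σ_{d1,d2,d5,d6} G⁽¹⁾(d4,r1,d1,d5)·G⁽²⁾(d1,r2,d2)·G⁽³⁾(d2,r3,d3,d6)·G⁽⁵⁾(d5,d6)·U⁽¹⁾(i1,r1)·U⁽²⁾(i2,r2)·U⁽³⁾(i3,r3). -/
/-!
After expanding the matrix products and distributing, both sides of each identity are sums, over
the same ten indices `r1, …, r4, d1, …, d6`, of the same product of core and factor entries; only
the order of summation differs. Each iterated sum is therefore collapsed to a single sum over a
product of finite types, and the two are matched by the bijection permuting the coordinates.
-/

open Matrix in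
/-- Under a Tucker-O-Minus decomposition of the 4th-order tensor `X`,
the mode-2 unfolding factorizes as `X_(2) = U² · G²_(2) · A^{≠2}` and the mode-4
unfolding as `X_(4) = U⁴ · G⁴_(2) · A^{≠4}`, with the matrices `A^{≠2}` and `A^{≠4}`
given entrywise by contracting the remaining core factors with the remaining factor
matrices. -/
theorem tomd_unfolding_factorization_modes_2_4
    (I1 I2 I3 I4 R1 R2 R3 R4 D1 D2 D3 D4 D5 D6 : ℕ)
    (X : Fin I1 → Fin I2 → Fin I3 → Fin I4 → ℝ)
    (U1 : Matrix (Fin I1) (Fin R1) ℝ) (U2 : Matrix (Fin I2) (Fin R2) ℝ)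
    (U3 : Matrix (Fin I3) (Fin R3) ℝ) (U4 : Matrix (Fin I4) (Fin R4) ℝ)
    (G1 : Fin D4 → Fin R1 → Fin D1 → Fin D5 → ℝ)
    (G2 : Fin D1 → Fin R2 → Fin D2 → ℝ)
    (G3 : Fin D2 → Fin R3 → Fin D3 → Fin D6 → ℝ)
    (G4 : Fin D3 → Fin R4 → Fin D4 → ℝ)
    (G5 : Fin D5 → Fin D6 → ℝ)
    (G : Fin R1 → Fin R2 → Fin R3 → Fin R4 → ℝ)
    (hG : ∀ r1 r2 r3 r4, G r1 r2 r3 r4 =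
      ∑ d1 : Fin D1, ∑ d2 : Fin D2, ∑ d3 : Fin D3, ∑ d4 : Fin D4, ∑ d5 : Fin D5, ∑ d6 : Fin D6,
        G1 d4 r1 d1 d5 * G2 d1 r2 d2 * G3 d2 r3 d3 d6 * G4 d3 r4 d4 * G5 d5 d6)
    (hX : ∀ i1 i2 i3 i4, X i1 i2 i3 i4 =
      ∑ r1 : Fin R1, ∑ r2 : Fin R2, ∑ r3 : Fin R3, ∑ r4 : Fin R4,
        G r1 r2 r3 r4 * U1 i1 r1 * U2 i2 r2 * U3 i3 r3 * U4 i4 r4) :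
    -- mode 2 : X_(2) = U² · G²_(2) · A^{≠2}
    ((Matrix.of fun (i2 : Fin I2) (j : Fin I1 × Fin I3 × Fin I4) =>
        X j.1 i2 j.2.1 j.2.2) =
      U2 *
        (Matrix.of fun (r2 : Fin R2) (d : Fin D1 × Fin D2) =>
          G2 d.1 r2 d.2) *
        (Matrix.of fun (d : Fin D1 × Fin D2) (j : Fin I1 × Fin I3 × Fin I4) =>
          ∑ r1 : Fin R1, ∑ r3 : Fin R3, ∑ r4 : Fin R4,
            ∑ d3 : Fin D3, ∑ d4 : Fin D4, ∑ d5 : Fin D5, ∑ d6 : Fin D6,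
              G1 d4 r1 d.1 d5 * G3 d.2 r3 d3 d6 * G4 d3 r4 d4 * G5 d5 d6 *
                U1 j.1 r1 * U3 j.2.1 r3 * U4 j.2.2 r4))
    ∧
    -- mode 4 : X_(4) = U⁴ · G⁴_(2) · A^{≠4}
    ((Matrix.of fun (i4 : Fin I4) (j : Fin I1 × Fin I2 × Fin I3) =>
        X j.1 j.2.1 j.2.2 i4) =
      U4 *
        (Matrix.of fun (r4 : Fin R4) (d : Fin D3 × Fin D4) =>
          G4 d.1 r4 d.2) *
        (Matrix.of fun (d : Fin D3 × Fin D4) (j : Fin I1 × Fin I2 × Fin I3) =>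
          ∑ r1 : Fin R1, ∑ r2 : Fin R2, ∑ r3 : Fin R3,
            ∑ d1 : Fin D1, ∑ d2 : Fin D2, ∑ d5 : Fin D5, ∑ d6 : Fin D6,
              G1 d.2 r1 d1 d5 * G2 d1 r2 d2 * G3 d2 r3 d.1 d6 * G5 d5 d6 *
                U1 j.1 r1 * U2 j.2.1 r2 * U3 j.2.2 r3)) := by
  constructor
  · ext i2 ⟨i1, i3, i4⟩
    simp (maxSteps := 2000000) only [Matrix.of_apply, Matrix.mul_apply, hX, hG,
      Fintype.sum_prod_type, Finset.sum_mul, Finset.mul_sum]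
    simp only [← Fintype.sum_prod_type']
    -- On the right, the contracted pair `(d1, d2)` is outermost, and distributing leaves the sum
    -- over `r2` (from the product of `U2` with the unfolding of `G2`) innermost.
    exact Fintype.sum_equiv
      { toFun := fun ⟨r1, r2, r3, r4, d1, d2, d3, d4, d5, d6⟩ => (d1, d2, r1, r3, r4, d3, d4, d5, d6, r2)
        invFun := fun ⟨d1, d2, r1, r3, r4, d3, d4, d5, d6, r2⟩ => (r1, r2, r3, r4, d1, d2, d3, d4, d5, d6)
        left_inv := fun _ => rfl
        right_inv := fun _ => rfl } _ _ (fun _ => by simp only [Equiv.coe_fn_mk]; ring)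
  · ext i4 ⟨i1, i2, i3⟩
    simp (maxSteps := 2000000) only [Matrix.of_apply, Matrix.mul_apply, hX, hG,
      Fintype.sum_prod_type, Finset.sum_mul, Finset.mul_sum]
    simp only [← Fintype.sum_prod_type']
    -- Here the contracted pair is `(d3, d4)`, and the sum over `r4` is innermost.
    exact Fintype.sum_equiv
      { toFun := fun ⟨r1, r2, r3, r4, d1, d2, d3, d4, d5, d6⟩ => (d3, d4, r1, r2, r3, d1, d2, d5, d6, r4)
        invFun := fun ⟨d3, d4, r1, r2, r3, d1, d2, d5, d6, r4⟩ => (r1, r2, r3, r4, d1, d2, d3, d4, d5, d6)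
        left_inv := fun _ => rfl
        right_inv := fun _ => rfl } _ _ (fun _ => by simp only [Equiv.coe_fn_mk]; ring)
end

section
/- Let N ≥ 2, let 1 ≤ K < N, and let p ∈ ℝ^N satisfy p_1 ≤ p_2 ≤ ⋯ ≤ p_N with K·p_{K+1} − Σ_{k=1}^K p_k > 0. Set λ = (K·p_{K+1} − Σ_{k=1}^K p_k)/2, and define m* ∈ ℝ^N by m*_j = (p_{K+1} − p_j)/(K·p_{K+1} − Σ_{k=1}^K p_k) for j ≤ K and m*_j = 0 for j > K. Then m* minimizes the function m ↦ Σ_{j=1}^N p_j·m_j + λ·Σ_{j=1}^N m_j² over the probability simplex {m ∈ ℝ^N : m_j ≥ 0 for all j, Σ_{j=1}^N m_j = 1}. -/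
/-! The objective is separable and strictly convex, so the KKT conditions suffice. Write `c` for the
`(K+1)`-st entry of `p`, `D = 2λ` for the normalizer. With `c` as multiplier of the constraint
`∑ m_j = 1`, each coordinate of `m*` minimizes `x ↦ (p_j - c) x + λ x²` over `x ≥ 0`: if `p_j ≤ c` the
vertex of the parabola is `(c - p_j) / D`, and if `p_j ≥ c` the minimum is at `0`. Summing these
inequalities removes the multiplier, since both vectors have total mass `1`. -/

/-- A sum over `Fin N` of a function cut off at index `K` is a sum over `Fin K`. -/
lemma sum_ite_val_lt {N K : ℕ} (h : K ≤ N) (f : Fin N → ℝ) :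
    (∑ j : Fin N, if j.val < K then f j else 0) = ∑ k : Fin K, f ⟨k, k.isLt.trans_le h⟩ := by
  obtain ⟨d, rfl⟩ := Nat.exists_eq_add_of_le h
  rw [Fin.sum_univ_add]
  simp [Fin.castAdd, Fin.castLE]

/-- Let `N ≥ 2`, `1 ≤ K < N`, and let `p ∈ ℝ^N` be sorted in
ascending order (`Monotone p` on `Fin N`, so `p ⟨0⟩ ≤ ⋯ ≤ p ⟨N-1⟩`; here `p ⟨K⟩` is the
`(K+1)`-st entry) with `K·p_{K+1} − Σ_{k=1}^K p_k > 0`.  With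
`λ = (K·p_{K+1} − Σ_{k=1}^K p_k)/2` and `m*_j = (p_{K+1} − p_j)/(K·p_{K+1} − Σ_{k=1}^K p_k)`
for `j ≤ K`, `m*_j = 0` for `j > K`, the vector `m*` minimizes
`m ↦ Σ_j p_j·m_j + λ·Σ_j m_j²` over the probability simplex. -/
theorem adaptive_neighbor_simplex_minimizer
    {N : ℕ} (hN : 2 ≤ N) (K : ℕ) (hK1 : 1 ≤ K) (hKN : K < N)
    (p : Fin N → ℝ) (hp : Monotone p)
    (hpos : 0 < (K : ℝ) * p ⟨K, hKN⟩ - ∑ k : Fin K, p ⟨k, k.isLt.trans hKN⟩) :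
    let lam : ℝ := ((K : ℝ) * p ⟨K, hKN⟩ - ∑ k : Fin K, p ⟨k, k.isLt.trans hKN⟩) / 2
    let mstar : Fin N → ℝ := fun j =>
      if j.val < K then
        (p ⟨K, hKN⟩ - p j) /
          ((K : ℝ) * p ⟨K, hKN⟩ - ∑ k : Fin K, p ⟨k, k.isLt.trans hKN⟩)
      else 0
    (∀ j, 0 ≤ mstar j) ∧ (∑ j : Fin N, mstar j = 1) ∧
      ∀ mm : Fin N → ℝ, (∀ j, 0 ≤ mm j) → (∑ j : Fin N, mm j = 1) →
        (∑ j : Fin N, p j * mstar j) + lam * (∑ j : Fin N, (mstar j) ^ 2) ≤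
          (∑ j : Fin N, p j * mm j) + lam * (∑ j : Fin N, (mm j) ^ 2) := by
  intro lam mstar
  set c := p ⟨K, hKN⟩ with hc
  set D := (K : ℝ) * c - ∑ k : Fin K, p ⟨k, k.isLt.trans hKN⟩ with hD
  have hlow : ∀ j : Fin N, j.val < K → p j ≤ c := fun j hj => hp (Fin.mk_le_mk.2 hj.le)
  have hhigh : ∀ j : Fin N, ¬ j.val < K → c ≤ p j := fun j hj => hp (Fin.mk_le_mk.2 (not_lt.1 hj))
  have hsum : ∑ j : Fin N, mstar j = 1 := by
    simp only [mstar]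
    rw [sum_ite_val_lt hKN.le (fun j => (c - p j) / D), ← Finset.sum_div, Finset.sum_sub_distrib]
    simp only [Finset.sum_const, Finset.card_univ, Fintype.card_fin, nsmul_eq_mul]
    exact div_self hpos.ne'
  refine ⟨fun j => ?_, hsum, fun mm hmm hmsum => ?_⟩
  · simp only [mstar]
    split_ifs with hj
    · exact div_nonneg (sub_nonneg.2 (hlow j hj)) hpos.le
    · exact le_rfl
  have key : ∀ j, p j * mstar j + lam * mstar j ^ 2 - c * mstar j ≤
      p j * mm j + lam * mm j ^ 2 - c * mm j := by
    intro j
    have hlam : lam = D / 2 := rfl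
    by_cases hj : j.val < K
    · have hm : D * mstar j = c - p j := by
        simp only [mstar, if_pos hj]
        exact mul_div_cancel₀ _ hpos.ne'
      have hpj : p j = c - D * mstar j := by linarith
      -- The difference of the two sides is `(D / 2) (m_j - m*_j)²`.
      rw [hlam, hpj]
      nlinarith [mul_nonneg hpos.le (sq_nonneg (mm j - mstar j))]
    · have hm : mstar j = 0 := if_neg hj
      rw [hlam, hm]
      nlinarith [mul_nonneg hpos.le (sq_nonneg (mm j)),
        mul_nonneg (sub_nonneg.2 (hhigh j hj)) (hmm j)]
  have h := Finset.sum_le_sum fun j (_ : j ∈ Finset.univ) => key j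
  simp only [Finset.sum_sub_distrib, Finset.sum_add_distrib, ← Finset.mul_sum, hsum, hmsum] at h
  linarith
end
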